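/- For every τ ∈ ℍ and every z in a sufficiently small neighborhood of 0 one has ∑_{n≥0} (−1)^n V_{2n}(q) (πz)^{2n}/(2n)! = exp(∑_{n≥1} (4ⁿ − 1) B_{2n} E_{2n}(τ) (2πiz)^{2n} / (2n·(2n)!)). -/

import Mathlib

/-!
Write `q = qq τ`, `x = exp (2πiz)` and `Θ(x) = ∏_{n ≥ 1} (1 - x q^n) (1 - x⁻¹ q^n)`.

Expanding cosines, the left-hand side is
`∑_j (-1)^j q^(j(3j+1)/2) cos ((6j + 1) π z) / ∑_j (-1)^j q^(j(3j+1)/2)`.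
By the quintuple product identity this equals `cos (πz) Θ(x²) / Θ(x)` (`hasSum_Vram`).

The quintuple product is obtained by multiplying two theta series. Collecting the powers of `x` and
splitting them modulo 3 turns the product into the pentagonal series times a constant `pentConst q`
(`quintuple`), while Jacobi's triple product (`jacobi_triple`, the limit of the finite identity
`finite_triple`) turns the two factors into infinite products (`pent_product`). The constant need not
be evaluated: the case `x = 1` determines its product with the denominator of `Vram`, and
shows that both are nonzero.

It remains to take logarithms. The Lambert expansion `log_thetaProd` of `log Θ` produces the divisor
sums in the Eisenstein series. Since `cos (πz) = P(2z) / P(z)` with `P(w) = sin (πw) / (πw)`, the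
Euler product of `P` and the values `ζ(2k)` (`hasSum_log_sinProd`) produce their constant terms. Both
enter through a difference of the values at `2z` and `z`, whence the factor `4^n - 1`.
-/

open Complex Filter
open scoped Real

noncomputable section

/-- `q = e^{2πiτ}`. -/
def qq (τ : ℂ) : ℂ := Complex.exp (2 * (π : ℂ) * Complex.I * τ)

/-- The normalized Eisenstein series `E_{2k}(τ) = 1 − (4k/B_{2k}) ∑_{n≥1} σ_{2k−1}(n) qⁿ`. -/
def Eser (k : ℕ) (τ : ℂ) : ℂ :=
  1 - (4 * k / ((bernoulli (2 * k) : ℚ) : ℂ)) *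
    ∑' n : ℕ, ((ArithmeticFunction.sigma (2 * k - 1)) (n + 1) : ℂ) * qq τ ^ (n + 1)

/-- Ramanujan's series `V_{2n}(q)`:
numerator `∑_{j∈ℤ} (−1)^j (6j+1)^{2n} q^{j(3j+1)/2}` divided by
denominator `∑_{j∈ℤ} (−1)^j q^{j(3j+1)/2}`. -/
def Vram (n : ℕ) (q : ℂ) : ℂ :=
  (∑' j : ℤ, (-1 : ℂ) ^ j * ((6 * j + 1 : ℤ) : ℂ) ^ (2 * n) * q ^ (j * (3 * j + 1) / 2)) /
    (∑' j : ℤ, (-1 : ℂ) ^ j * q ^ (j * (3 * j + 1) / 2))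

/-! ### The infinite q-Pochhammer symbol -/

/-- The infinite q-Pochhammer symbol `(a; q)_∞ = ∏_{i ≥ 0} (1 - a q^i)`. -/
def qpoch (q a : ℂ) : ℂ := ∏' i : ℕ, (1 - a * q ^ i)

lemma summable_geom {q : ℂ} (hq : ‖q‖ < 1) (a : ℂ) : Summable fun i : ℕ => a * q ^ i :=
  (summable_geometric_of_norm_lt_one hq).mul_left a

lemma multipliable_qpoch {q : ℂ} (hq : ‖q‖ < 1) (a : ℂ) :
    Multipliable fun i : ℕ => (1 - a * q ^ i) := by
  have := multipliable_one_add_of_summable (f := fun i : ℕ => -(a * q ^ i))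
    (by simpa using (summable_geom hq a).norm)
  simpa [sub_eq_add_neg] using this

lemma hasProd_qpoch {q : ℂ} (hq : ‖q‖ < 1) (a : ℂ) :
    HasProd (fun i : ℕ => (1 - a * q ^ i)) (qpoch q a) := (multipliable_qpoch hq a).hasProd

lemma qpoch_ne_zero {q : ℂ} (hq : ‖q‖ < 1) {a : ℂ} (h : ∀ i : ℕ, 1 - a * q ^ i ≠ 0) :
    qpoch q a ≠ 0 := by
  have := tprod_one_add_ne_zero_of_summable (f := fun i : ℕ => -(a * q ^ i))
    (by simpa [sub_eq_add_neg] using h) (by simpa using (summable_geom hq a).norm)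
  simpa [sub_eq_add_neg, qpoch] using this

lemma qpoch_ne_zero' {q : ℂ} (hq : ‖q‖ < 1) {a : ℂ} (h : ‖a‖ < 1) : qpoch q a ≠ 0 := by
  refine qpoch_ne_zero hq fun i h0 => ?_
  have h1 : a * q ^ i = 1 := (sub_eq_zero.mp h0).symm
  have h2 : ‖a‖ * ‖q‖ ^ i = 1 := by rw [← norm_pow, ← norm_mul, h1, norm_one]
  have h3 : ‖q‖ ^ i ≤ 1 := pow_le_one₀ (norm_nonneg _) hq.le
  nlinarith [norm_nonneg a, norm_nonneg q]

lemma qpoch_step {q : ℂ} (hq : ‖q‖ < 1) (a : ℂ) : qpoch q a = (1 - a) * qpoch q (a * q) := by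
  have h1 : Multipliable fun i : ℕ => (1 - a * q ^ (i + 1)) := by
    simpa [pow_succ', mul_assoc] using multipliable_qpoch hq (a * q)
  have h2 := tprod_eq_zero_mul' (f := fun i : ℕ => (1 - a * q ^ i)) h1
  simp only [pow_zero, mul_one] at h2
  rw [qpoch, h2, qpoch]
  congr 2; ext i; ring

lemma norm_sq_lt {q : ℂ} (hq : ‖q‖ < 1) : ‖q ^ 2‖ < 1 := by
  rw [norm_pow]; exact pow_lt_one₀ (norm_nonneg _) hq two_ne_zero

lemma qpoch_split {q : ℂ} (hq : ‖q‖ < 1) (a : ℂ) :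
    qpoch (q ^ 2) a * qpoch (q ^ 2) (a * q) = qpoch q a := by
  have h1 := hasProd_qpoch (norm_sq_lt hq) a
  have h2 := hasProd_qpoch (norm_sq_lt hq) (a * q)
  refine (HasProd.even_mul_odd (f := fun i : ℕ => (1 - a * q ^ i)) ?_ ?_).tprod_eq.symm
  · simpa [pow_mul] using h1
  · simpa [pow_mul, pow_succ', mul_assoc] using h2

lemma qpoch_mul_neg {q : ℂ} (hq : ‖q‖ < 1) (a : ℂ) :
    qpoch q a * qpoch q (-a) = qpoch (q ^ 2) (a ^ 2) := by
  have h := (hasProd_qpoch hq a).mul (hasProd_qpoch hq (-a))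
  rw [← h.tprod_eq, qpoch]
  congr 1; ext i; ring

/-! ### The Jacobi triple product -/

/-- `(q; q)_n`. -/
def qfac (q : ℂ) (n : ℕ) : ℂ := ∏ i ∈ Finset.range n, (1 - q ^ (i + 1))

lemma one_sub_pow_ne {q : ℂ} (hq : ‖q‖ < 1) (i : ℕ) : 1 - q ^ (i + 1) ≠ 0 := by
  intro h
  have h2 : ‖q‖ ^ (i + 1) = 1 := by rw [← norm_pow, ← sub_eq_zero.mp h, norm_one]
  have := pow_lt_one₀ (norm_nonneg q) hq (by omega : i + 1 ≠ 0)
  linarith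

lemma qfac_ne_zero {q : ℂ} (hq : ‖q‖ < 1) (n : ℕ) : qfac q n ≠ 0 :=
  Finset.prod_ne_zero_iff.mpr fun i _ => one_sub_pow_ne hq i

lemma qfac_tendsto {q : ℂ} (hq : ‖q‖ < 1) : Tendsto (qfac q) atTop (nhds (qpoch q q)) := by
  have := (hasProd_qpoch hq q).tendsto_prod_nat
  exact this.congr fun n => by simp [qfac, pow_succ']

/-- `1 / (q; q)_m`, with value `0` at negative `m`; this makes the recurrence `qrec_step` hold for
all integers. -/
def qrec (q : ℂ) (m : ℤ) : ℂ := if m < 0 then 0 else (qfac q m.toNat)⁻¹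

lemma qrec_step {q : ℂ} (hq : ‖q‖ < 1) (m : ℤ) : qrec q (m - 1) = (1 - q ^ m) * qrec q m := by
  rcases lt_trichotomy m 0 with h | h | h
  · simp [qrec, h, show m - 1 < 0 by omega]
  · subst h; simp [qrec]
  · obtain ⟨n, rfl⟩ : ∃ n : ℕ, m = n + 1 := ⟨(m - 1).toNat, by omega⟩
    have h1 : ¬ ((n : ℤ) + 1 < 0) := by omega
    have h2 : ((n : ℤ) + 1).toNat = n + 1 := by omega
    have h3 := one_sub_pow_ne hq n
    have h4 := qfac_ne_zero hq n
    have h5 : q ^ ((n : ℤ) + 1) = q ^ (n + 1) := by exact_mod_cast zpow_natCast q (n + 1)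
    have h6 : qfac q (n + 1) = qfac q n * (1 - q ^ (n + 1)) := Finset.prod_range_succ _ _
    simp only [qrec, add_sub_cancel_right, h1, h2, h5, h6, if_false, Int.toNat_natCast,
      show ¬ ((n : ℤ) < 0) by omega]
    field_simp

lemma tri_succ (k : ℤ) : (k + 1) * (k + 1 + 1) / 2 = k * (k + 1) / 2 + (k + 1) := by
  rw [show (k + 1) * (k + 1 + 1) = k * (k + 1) + (k + 1) * 2 by ring,
    Int.add_mul_ediv_right _ _ two_ne_zero]

lemma two_tri (k : ℤ) : 2 * (k * (k + 1) / 2) = k * (k + 1) :=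
  Int.mul_ediv_cancel' (Int.even_mul_succ_self k).two_dvd

/-- The general term of the theta series. -/
def thetaTerm (q x : ℂ) (k : ℤ) : ℂ := (-1) ^ k * q ^ (k * (k + 1) / 2) * x ^ k

lemma thetaTerm_succ {q x : ℂ} (hq0 : q ≠ 0) (hx : x ≠ 0) (k : ℤ) :
    thetaTerm q x (k + 1) = -(x * q ^ (k + 1)) * thetaTerm q x k := by
  simp only [thetaTerm, tri_succ]
  rw [zpow_add₀ hq0 (k * (k + 1) / 2), zpow_add_one₀ hx, zpow_add_one₀ (by norm_num : (-1 : ℂ) ≠ 0)]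
  ring

/-- The Gaussian binomial coefficient `[2N choose N + k]_q`, which is `0` unless `|k| ≤ N`. -/
def finCoeff (q : ℂ) (N : ℕ) (k : ℤ) : ℂ := qfac q (2 * N) * qrec q (N - k) * qrec q (N + k)

/-- Two steps of the q-Pascal rule: the passage from `2N` to `2N + 2`. -/
lemma finCoeff_succ {q : ℂ} (hq : ‖q‖ < 1) (hq0 : q ≠ 0) (N : ℕ) (k : ℤ) :
    finCoeff q (N + 1) k = (1 + q ^ (2 * N + 1)) * finCoeff q N k +
      q ^ ((N : ℤ) + 1 - k) * finCoeff q N (k - 1) + q ^ ((N : ℤ) + 1 + k) * finCoeff q N (k + 1) := by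
  have e1 : qrec q (N - k) = (1 - q ^ ((N : ℤ) + 1 - k)) * qrec q (N + 1 - k) := by
    rw [← qrec_step hq]; congr 1; ring
  have e2 : qrec q (N + k) = (1 - q ^ ((N : ℤ) + 1 + k)) * qrec q (N + 1 + k) := by
    rw [← qrec_step hq]; congr 1; ring
  have e3 : qrec q (N - (k + 1)) = (1 - q ^ ((N : ℤ) + 1 - k) / q) * qrec q (N - k) := by
    rw [div_eq_mul_inv, ← zpow_sub_one₀ hq0, show (N : ℤ) + 1 - k - 1 = N - k by ring, ← qrec_step hq]
    congr 1; ring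
  have e4 : qrec q (N + (k - 1)) = (1 - q ^ ((N : ℤ) + 1 + k) / q) * qrec q (N + k) := by
    rw [div_eq_mul_inv, ← zpow_sub_one₀ hq0, show (N : ℤ) + 1 + k - 1 = N + k by ring, ← qrec_step hq]
    congr 1; ring
  have e5 : q ^ (2 * N + 1) = q ^ ((N : ℤ) + 1 - k) * q ^ ((N : ℤ) + 1 + k) / q := by
    rw [← zpow_add₀ hq0, div_eq_mul_inv, ← zpow_sub_one₀ hq0, ← zpow_natCast]; congr 1; push_cast; ring
  have e6 : qfac q (2 * (N + 1)) = qfac q (2 * N) * (1 - q ^ (2 * N + 1)) *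
      (1 - q ^ (2 * N + 1) * q) := by
    rw [← pow_succ, show 2 * (N + 1) = 2 * N + 1 + 1 by ring]
    simp [qfac, Finset.prod_range_succ]
  simp only [finCoeff, e6]
  push_cast
  rw [show (N : ℤ) - (k - 1) = N + 1 - k by ring, show (N : ℤ) + (k + 1) = N + 1 + k by ring,
    e3, e4, e1, e2, e5]
  field_simp
  ring

lemma HasSum.congr_fun' {ι α : Type*} [AddCommMonoid α] [TopologicalSpace α] {f g : ι → α}
    {a : α} (h : HasSum f a) (e : ∀ i, g i = f i) :
    HasSum g a := (funext e : g = f) ▸ h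

/-- Finite form of the triple product, i.e. the q-binomial theorem recentred at its middle term. The
sum over `ℤ` has finite support. -/
lemma finite_triple {q x : ℂ} (hq : ‖q‖ < 1) (hq0 : q ≠ 0) (hx : x ≠ 0) (N : ℕ) :
    HasSum (fun k : ℤ => finCoeff q N k * thetaTerm q x k)
      ((∏ i ∈ Finset.range N, (1 - x * q * q ^ i)) * ∏ i ∈ Finset.range N, (1 - x⁻¹ * q ^ i)) := by
  induction N with
  | zero =>
    have : ∀ k : ℤ, k ≠ 0 → finCoeff q 0 k * thetaTerm q x k = 0 := by
      intro k hk
      rcases lt_or_gt_of_ne hk with h | h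
      · simp [finCoeff, qrec, h]
      · simp [finCoeff, qrec, h]
    convert hasSum_single 0 this using 1
    simp [finCoeff, qrec, qfac, thetaTerm]
  | succ N ih =>
    have h1 := (Equiv.subRight (1 : ℤ)).hasSum_iff.mpr ih
    have h2 := (Equiv.addRight (1 : ℤ)).hasSum_iff.mpr ih
    have h := ((ih.mul_left (1 + q ^ (2 * N + 1))).add (h1.mul_left (-(x * q ^ (N + 1))))).add
      (h2.mul_left (-(x⁻¹ * q ^ N)))
    have hv : ∀ P Q : ℂ, P * (1 - x * q * q ^ N) * (Q * (1 - x⁻¹ * q ^ N)) =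
        (1 + q ^ (2 * N + 1)) * (P * Q) + -(x * q ^ (N + 1)) * (P * Q) +
          -(x⁻¹ * q ^ N) * (P * Q) := by
      intro P Q
      field_simp
      ring
    rw [Finset.prod_range_succ, Finset.prod_range_succ, hv]
    refine h.congr_fun' fun k => ?_
    · simp only [Function.comp_apply, Equiv.coe_addRight, Equiv.subRight_apply]
      have t1 := thetaTerm_succ hq0 hx k
      have t2 := thetaTerm_succ hq0 hx (k - 1)
      rw [sub_add_cancel] at t2
      have z1 : q ^ ((N : ℤ) + 1 - k) * q ^ k = q ^ (N + 1) := by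
        rw [← zpow_add₀ hq0, ← zpow_natCast]; congr 1; push_cast; ring
      have z2 : q ^ ((N : ℤ) + 1 + k) = q ^ N * q ^ (k + 1) := by
        rw [← zpow_natCast q N, ← zpow_add₀ hq0]; congr 1; ring
      rw [finCoeff_succ hq hq0, t1, z2, ← z1, t2]
      field_simp
      ring

/-- Ratio test for positive sequences with consecutive ratios `r ^ n * s`, `r < 1`. -/
lemma summable_of_ratio_pow {r s : ℝ} (hr0 : 0 < r) (hr : r < 1) (hs : 0 < s) (f : ℕ → ℝ)
    (hf : ∀ n, 0 < f n) (h : ∀ n, f (n + 1) = r ^ n * s * f n) : Summable f := by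
  refine summable_of_ratio_test_tendsto_lt_one (l := 0) one_pos
    (Eventually.of_forall fun n => (hf n).ne') ?_
  have h1 : Tendsto (fun n : ℕ => r ^ n * s) atTop (nhds (0 * s)) :=
    (tendsto_pow_atTop_nhds_zero_of_lt_one hr0.le hr).mul_const s
  rw [zero_mul] at h1
  refine h1.congr fun n => ?_
  have := hf n
  have h0 : 0 < r ^ n * s := by positivity
  rw [h, norm_mul, mul_div_assoc, div_self (norm_ne_zero_iff.mpr this.ne'), mul_one,
    Real.norm_of_nonneg h0.le]

lemma summable_tri {r s : ℝ} (hr0 : 0 < r) (hr : r < 1) (hs : 0 < s) :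
    Summable fun k : ℤ => r ^ (k * (k + 1) / 2) * s ^ k := by
  refine Summable.of_nat_of_neg ?_ ?_
  · refine summable_of_ratio_pow (s := r * s) hr0 hr (by positivity) _ (fun n => by positivity) fun n => ?_
    push_cast
    rw [tri_succ, zpow_add₀ hr0.ne', zpow_add_one₀ hs.ne', zpow_add_one₀ hr0.ne', zpow_natCast r n]
    ring
  · refine summable_of_ratio_pow (s := s⁻¹) hr0 hr (by positivity) _ (fun n => by positivity) fun n => ?_
    have := tri_succ (-((n : ℤ) + 1))
    push_cast
    rw [show -((n : ℤ) + 1) + 1 = -n by ring] at this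
    rw [show -((n : ℤ) + 1) + 1 = -n by ring, this, zpow_add₀ hr0.ne', neg_add, zpow_add₀ hs.ne']
    simp
    field_simp

lemma summable_norm_thetaTerm {q x : ℂ} (hq : ‖q‖ < 1) (hq0 : q ≠ 0) (hx : x ≠ 0) :
    Summable fun k : ℤ => ‖thetaTerm q x k‖ := by
  simpa [thetaTerm, norm_mul, norm_zpow] using
    summable_tri (norm_pos_iff.mpr hq0) hq (norm_pos_iff.mpr hx)

lemma qrec_tendsto {q : ℂ} (hq : ‖q‖ < 1) (c : ℤ) :
    Tendsto (fun N : ℕ => qrec q (N + c)) atTop (nhds (qpoch q q)⁻¹) := by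
  have h0 : qpoch q q ≠ 0 := qpoch_ne_zero' hq hq
  have h1 : Tendsto (fun N : ℕ => ((N : ℤ) + c).toNat) atTop atTop := by
    refine tendsto_atTop.mpr fun b => ?_
    filter_upwards [eventually_ge_atTop (b + c.natAbs)] with N hN
    omega
  refine (((qfac_tendsto hq).comp h1).inv₀ h0).congr' ?_
  filter_upwards [eventually_ge_atTop c.natAbs] with N hN
  simp [qrec, show ¬ ((N : ℤ) + c < 0) by omega]

lemma qrec_bdd {q : ℂ} (hq : ‖q‖ < 1) : ∃ C, ∀ m, ‖qrec q m‖ ≤ C := by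
  have h0 : qpoch q q ≠ 0 := qpoch_ne_zero' hq hq
  obtain ⟨C, hC⟩ := ((qfac_tendsto hq).inv₀ h0).norm.bddAbove_range
  refine ⟨C, fun m => ?_⟩
  have hh : ∀ n, ‖(qfac q n)⁻¹‖ ≤ C := fun n => hC ⟨n, rfl⟩
  rw [qrec]; split_ifs
  · simpa using (norm_nonneg _).trans (hh 0)
  · exact hh _

lemma qfac_bdd {q : ℂ} (hq : ‖q‖ < 1) : ∃ C, ∀ m, ‖qfac q m‖ ≤ C := by
  obtain ⟨C, hC⟩ := (qfac_tendsto hq).norm.bddAbove_range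
  exact ⟨C, fun n => hC ⟨n, rfl⟩⟩

/-- Jacobi's triple product. As `N → ∞`, each Gaussian binomial `[2N choose N + k]_q` tends to
`1 / (q; q)_∞` and all of them are bounded uniformly, so dominated convergence applies to
`finite_triple`. -/
theorem jacobi_triple {q x : ℂ} (hq : ‖q‖ < 1) (hq0 : q ≠ 0) (hx : x ≠ 0) :
    ∑' k : ℤ, thetaTerm q x k = qpoch q q * qpoch q (x * q) * qpoch q x⁻¹ := by
  have h0 : qpoch q q ≠ 0 := qpoch_ne_zero' hq hq
  obtain ⟨A, hA⟩ := qfac_bdd hq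
  obtain ⟨B, hB⟩ := qrec_bdd hq
  have hA0 : 0 ≤ A := (norm_nonneg _).trans (hA 0)
  have hB0 : 0 ≤ B := (norm_nonneg _).trans (hB 0)
  have hlim := tendsto_tsum_of_dominated_convergence (𝓕 := atTop)
    (f := fun (N : ℕ) (k : ℤ) => finCoeff q N k * thetaTerm q x k)
    (g := fun k : ℤ => (qpoch q q)⁻¹ * thetaTerm q x k)
    (bound := fun k => A * B * B * ‖thetaTerm q x k‖)
    ((summable_norm_thetaTerm hq hq0 hx).mul_left _) ?_ ?_
  · have hlim2 := ((hasProd_qpoch hq (x * q)).tendsto_prod_nat).mul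
      ((hasProd_qpoch hq x⁻¹).tendsto_prod_nat)
    have := tendsto_nhds_unique hlim
      (hlim2.congr fun N => (finite_triple hq hq0 hx N).tsum_eq.symm)
    rw [tsum_mul_left] at this
    rw [mul_assoc, ← this, mul_inv_cancel_left₀ h0]
  · intro k
    refine Tendsto.mul_const _ ?_
    have h2 : Tendsto (fun N : ℕ => 2 * N) atTop atTop :=
      tendsto_id.const_mul_atTop' two_pos
    have := (((qfac_tendsto hq).comp h2).mul (qrec_tendsto hq (-k))).mul (qrec_tendsto hq k)
    rw [mul_inv_cancel₀ h0, one_mul] at this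
    exact this
  · refine Eventually.of_forall fun N k => ?_
    rw [norm_mul, finCoeff, norm_mul, norm_mul]
    gcongr
    · exact hA _
    · exact hB _
    · exact hB _

/-! ### The quintuple product -/

lemma two_pent (k : ℤ) : 2 * (k * (3 * k + 1) / 2) = k * (3 * k + 1) := by
  refine Int.mul_ediv_cancel' ?_
  rcases Int.even_or_odd' k with ⟨m, rfl | rfl⟩
  · exact ⟨m * (3 * (2 * m) + 1), by ring⟩
  · exact ⟨(2 * m + 1) * (3 * m + 2), by ring⟩

/-- The general term of the pentagonal theta series twisted by `x ^ (3 * k)`. -/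
def pentTerm (q x : ℂ) (k : ℤ) : ℂ := (-1) ^ k * q ^ (k * (3 * k + 1) / 2) * x ^ (3 * k)

lemma pentTerm_eq {q x : ℂ} (hq0 : q ≠ 0) (k : ℤ) :
    pentTerm q x k = thetaTerm (q ^ 3) (x ^ 3 / q) k := by
  have h1 := two_tri k
  have h2 := two_pent k
  have e1 : (q ^ 3) ^ (k * (k + 1) / 2) = q ^ (3 * (k * (k + 1) / 2)) := by
    rw [zpow_mul]; norm_cast
  have e2 : q ^ (k * (3 * k + 1) / 2) = q ^ (3 * (k * (k + 1) / 2)) / q ^ k := by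
    rw [← zpow_sub₀ hq0]; congr 1; linarith
  have e3 : (x ^ 3) ^ k = x ^ (3 * k) := by rw [zpow_mul]; norm_cast
  rw [pentTerm, thetaTerm, e1, e2, div_zpow, e3]
  ring

lemma norm_pow_lt {q : ℂ} (hq : ‖q‖ < 1) {n : ℕ} (hn : n ≠ 0) : ‖q ^ n‖ < 1 := by
  rw [norm_pow]; exact pow_lt_one₀ (norm_nonneg _) hq hn

lemma summable_norm_pentTerm {q x : ℂ} (hq : ‖q‖ < 1) (hq0 : q ≠ 0) (hx : x ≠ 0) :
    Summable fun k : ℤ => ‖pentTerm q x k‖ := by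
  simp only [pentTerm_eq hq0]
  exact summable_norm_thetaTerm (norm_pow_lt hq three_ne_zero) (pow_ne_zero _ hq0)
    (div_ne_zero (pow_ne_zero _ hx) hq0)

/-- The constant `∑_j (-1)^j q^(3 j^2 - j)`. -/
def pentConst (q : ℂ) : ℂ := ∑' j : ℤ, (-1 : ℂ) ^ j * q ^ (3 * j ^ 2 - j)

/-- The shear `(n, j) ↦ (n - 2 j, j)` of the plane lattice. -/
def shear : ℤ × ℤ ≃ ℤ × ℤ where
  toFun p := (p.1 - 2 * p.2, p.2)
  invFun p := (p.1 + 2 * p.2, p.2)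
  left_inv p := by simp
  right_inv p := by simp

/-- The coefficient left after collecting the terms with a fixed power `x ^ n` in the product of the
two theta series of `quintuple`, up to the factor `q ^ (n (n + 1) / 2)`. -/
def innerSum (q : ℂ) (n : ℤ) : ℂ :=
  ∑' j : ℤ, (-1 : ℂ) ^ j * q ^ (3 * j ^ 2 - (2 * n + 1) * j)

lemma theta_mul_theta {q x : ℂ} (hq0 : q ≠ 0) (hx : x ≠ 0) (n j : ℤ) :
    thetaTerm q (-x) (n - 2 * j) * thetaTerm (q ^ 2) (x ^ 2 / q) j =
      x ^ n * q ^ (n * (n + 1) / 2) * ((-1) ^ j * q ^ (3 * j ^ 2 - (2 * n + 1) * j)) := by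
  have h1 := two_tri (n - 2 * j)
  have h2 := two_tri n
  have h3 := two_tri j
  have e0 : (-x) ^ (n - 2 * j) = (-1) ^ (n - 2 * j) * x ^ (n - 2 * j) := by
    rw [← mul_zpow]; simp
  have e0' : ((-1 : ℂ) ^ (n - 2 * j)) * (-1) ^ (n - 2 * j) = 1 := by
    rw [← mul_zpow]; simp
  have e1 : (q ^ 2) ^ (j * (j + 1) / 2) = q ^ (2 * (j * (j + 1) / 2)) := by
    rw [zpow_mul]; norm_cast
  have e2 : (x ^ 2) ^ j = x ^ (2 * j) := by rw [zpow_mul]; norm_cast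
  have e3 : x ^ n = x ^ (n - 2 * j) * x ^ (2 * j) := by rw [← zpow_add₀ hx]; congr 1; ring
  have e4 : q ^ (n * (n + 1) / 2) * q ^ (3 * j ^ 2 - (2 * n + 1) * j) =
      q ^ ((n - 2 * j) * (n - 2 * j + 1) / 2) * q ^ (2 * (j * (j + 1) / 2)) / q ^ j := by
    rw [← zpow_add₀ hq0, ← zpow_add₀ hq0, ← zpow_sub₀ hq0]; congr 1; linarith
  rw [thetaTerm, thetaTerm, e0, e1, div_zpow, e2]
  calc _ = ((-1 : ℂ) ^ (n - 2 * j) * (-1) ^ (n - 2 * j)) * (x ^ (n - 2 * j) * x ^ (2 * j)) *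
        (-1) ^ j * (q ^ ((n - 2 * j) * (n - 2 * j + 1) / 2) * q ^ (2 * (j * (j + 1) / 2)) / q ^ j) := by
        ring
    _ = _ := by rw [e0', ← e3, ← e4]; ring

/-- The product of two theta series, summed along the lines on which the exponent of `x` is constant. -/
lemma hasSum_rows {q x : ℂ} (hq : ‖q‖ < 1) (hq0 : q ≠ 0) (hx : x ≠ 0) :
    HasSum (fun n : ℤ => x ^ n * q ^ (n * (n + 1) / 2) * innerSum q n)
      ((∑' i : ℤ, thetaTerm q (-x) i) * ∑' j : ℤ, thetaTerm (q ^ 2) (x ^ 2 / q) j) := by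
  have s1 := summable_norm_thetaTerm hq hq0 (neg_ne_zero.mpr hx)
  have s2 := summable_norm_thetaTerm (norm_sq_lt hq) (pow_ne_zero 2 hq0)
    (div_ne_zero (pow_ne_zero 2 hx) hq0)
  have h := (s1.of_norm.hasSum.mul s2.of_norm.hasSum
    (summable_mul_of_summable_norm s1 s2))
  have h' := shear.hasSum_iff.mpr h
  have hf := h'.prod_fiberwise fun n => (h'.summable.prod_factor n).hasSum
  refine hf.congr_fun' fun n => ?_
  simp only [Function.comp_apply, shear, Equiv.coe_fn_mk, theta_mul_theta hq0 hx, tsum_mul_left,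
    innerSum]

lemma zpow_neg_one_add (j k : ℤ) : (-1 : ℂ) ^ (j + k) = (-1) ^ k * (-1) ^ j := by
  rw [zpow_add₀ (by norm_num), mul_comm]

lemma innerSum_zero {q : ℂ} (hq0 : q ≠ 0) (k : ℤ) :
    innerSum q (3 * k) = (-1) ^ k * q ^ (-3 * k ^ 2 - k) * pentConst q := by
  rw [innerSum, ← (Equiv.addRight k).tsum_eq, pentConst, ← tsum_mul_left]
  refine tsum_congr fun j => ?_
  rw [Equiv.coe_addRight, zpow_neg_one_add,
    show 3 * (j + k) ^ 2 - (2 * (3 * k) + 1) * (j + k) = (-3 * k ^ 2 - k) + (3 * j ^ 2 - j) by ring,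
    zpow_add₀ hq0]
  ring

lemma innerSum_two {q : ℂ} (hq0 : q ≠ 0) (k : ℤ) :
    innerSum q (3 * k - 1) = (-1) ^ k * q ^ (-3 * k ^ 2 + k) * pentConst q := by
  rw [innerSum, ← (Equiv.subLeft k).tsum_eq, pentConst, ← tsum_mul_left]
  refine tsum_congr fun j => ?_
  rw [Equiv.subLeft_apply, sub_eq_neg_add, zpow_neg_one_add, zpow_neg,
    show 3 * (-j + k) ^ 2 - (2 * (3 * k - 1) + 1) * (-j + k) =
      (-3 * k ^ 2 + k) + (3 * j ^ 2 - j) by ring, zpow_add₀ hq0, ← inv_zpow, inv_neg_one]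
  ring

/-- The substitution `j ↦ 2k + 1 - j` changes the sign of every term. -/
lemma innerSum_one (q : ℂ) (k : ℤ) : innerSum q (3 * k + 1) = 0 := by
  have h : innerSum q (3 * k + 1) = - innerSum q (3 * k + 1) := by
    conv_lhs => rw [innerSum, ← (Equiv.subLeft (2 * k + 1)).tsum_eq]
    rw [innerSum, ← tsum_neg]
    refine tsum_congr fun j => ?_
    rw [Equiv.subLeft_apply, sub_eq_neg_add, zpow_neg_one_add, zpow_neg, ← inv_zpow, inv_neg_one,
      zpow_add₀ (by norm_num), zpow_mul]
    rw [show 3 * (-j + (2 * k + 1)) ^ 2 - (2 * (3 * k + 1) + 1) * (-j + (2 * k + 1)) =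
      3 * j ^ 2 - (2 * (3 * k + 1) + 1) * j by ring]
    norm_num
  simpa [self_eq_neg] using h

/-- The quintuple product identity up to the normalization `pentConst q`: the rows `n = 3k`, `3k + 2`
give the two series on the right and the rows `n = 3k + 1` vanish. -/
theorem quintuple {q x : ℂ} (hq : ‖q‖ < 1) (hq0 : q ≠ 0) (hx : x ≠ 0) :
    (∑' i : ℤ, thetaTerm q (-x) i) * (∑' j : ℤ, thetaTerm (q ^ 2) (x ^ 2 / q) j) =
      pentConst q * ((∑' k : ℤ, pentTerm q x k) + x⁻¹ * ∑' k : ℤ, pentTerm q x⁻¹ k) := by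
  have h := (Int.divModEquiv 3).symm.hasSum_iff.mpr (hasSum_rows hq hq0 hx)
  have h' := h.prod_fiberwise fun k => hasSum_fintype _
  have hx' := inv_ne_zero hx
  have sa := (summable_norm_pentTerm hq hq0 hx).of_norm.hasSum
  have sb := (summable_norm_pentTerm hq hq0 hx').of_norm.hasSum
  have sb' := (Equiv.subLeft (-1 : ℤ)).hasSum_iff.mpr sb
  refine h'.unique (((sa.add (sb'.mul_left x⁻¹)).mul_left (pentConst q)).congr_fun' fun k => ?_)
  have i2 : innerSum q (3 * k + 2) = innerSum q (3 * (k + 1) - 1) := by congr 1; ring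
  have p1 := two_tri (3 * k)
  have p2 := two_tri (3 * k + 2)
  have p3 := two_pent k
  have p4 := two_pent (-1 - k)
  have q1 : q ^ (k * (3 * k + 1) / 2) = q ^ (3 * k * (3 * k + 1) / 2) * q ^ (-3 * k ^ 2 - k) := by
    rw [← zpow_add₀ hq0]; congr 1; linarith
  have q2 : q ^ ((-1 - k) * (3 * (-1 - k) + 1) / 2) =
      q ^ ((3 * k + 2) * (3 * k + 2 + 1) / 2) * q ^ (-3 * (k + 1) ^ 2 + (k + 1)) := by
    rw [← zpow_add₀ hq0]; congr 1; linarith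
  have x2 : x⁻¹ * x⁻¹ ^ (3 * (-1 - k)) = x ^ (3 * k + 2) := by
    rw [inv_zpow', ← zpow_neg_one, ← zpow_add₀ hx]; congr 1; ring
  have s2 : (-1 : ℂ) ^ (-1 - k) = (-1) ^ (k + 1) := by
    rw [show -1 - k = -(k + 1) by ring, zpow_neg, ← inv_zpow, inv_neg_one]
  simp only [Fin.sum_univ_three, Function.comp_apply, Int.divModEquiv_symm_apply,
    Equiv.subLeft_apply, pentTerm]
  simp only [Fin.val_zero, Fin.val_one, Fin.val_two, Nat.cast_zero, Nat.cast_one, Nat.cast_ofNat,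
    add_zero, mul_comm k 3]
  rw [i2, innerSum_zero hq0, innerSum_one, innerSum_two hq0, q1, q2, s2, ← x2]
  ring

/-- The `z`-dependent part of the theta product, in the variable `x = exp (2 π i z)`. -/
def thetaProd (q x : ℂ) : ℂ := qpoch q (x * q) * qpoch q (x⁻¹ * q)

/-- The quintuple product with both theta series on the left of `quintuple` written as infinite
products; division by `thetaProd q x` is avoided. -/
theorem pent_product {q x : ℂ} (hq : ‖q‖ < 1) (hq0 : q ≠ 0) (hx : x ≠ 0) :
    pentConst q * ((∑' k : ℤ, pentTerm q x k) + x⁻¹ * ∑' k : ℤ, pentTerm q x⁻¹ k) *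
      thetaProd q x =
    qpoch q q * qpoch (q ^ 2) (q ^ 2) * (1 + x⁻¹) * thetaProd q (x ^ 2) := by
  rw [← quintuple hq hq0 hx, jacobi_triple hq hq0 (neg_ne_zero.mpr hx),
    jacobi_triple (norm_sq_lt hq) (pow_ne_zero 2 hq0) (div_ne_zero (pow_ne_zero 2 hx) hq0)]
  have e1 : x ^ 2 / q * q ^ 2 = x ^ 2 * q := by field_simp
  have e2 : (x ^ 2 / q)⁻¹ = (x ^ 2)⁻¹ * q := by field_simp
  have e3 := qpoch_step hq (-x)⁻¹
  have e4 := qpoch_mul_neg hq (x * q)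
  have e5 := qpoch_mul_neg hq (x⁻¹ * q)
  have e6 := qpoch_split hq (x ^ 2 * q)
  have e7 := qpoch_split hq ((x ^ 2)⁻¹ * q)
  rw [e1, e2, e3, thetaProd, thetaProd, ← e6, ← e7]
  rw [show x ^ 2 * q * q = (x * q) ^ 2 by ring, show (x ^ 2)⁻¹ * q * q = (x⁻¹ * q) ^ 2 by
    rw [mul_pow, inv_pow]; ring, ← e4, ← e5, inv_neg, neg_mul, neg_mul]
  ring

/-! ### Logarithms of infinite products -/

/-- Fubini for a double series: summing the rows and then their values equals summing over columns.
Here `G` collects the sums of the norms along the rows. -/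
lemma hasSum_swap {α β : Type*} {f : α → β → ℂ} {g : α → ℂ} {G : α → ℝ} {s : ℂ}
    (hf : ∀ a, HasSum (f a) (g a)) (hn : ∀ a, HasSum (fun b => ‖f a b‖) (G a))
    (hG : Summable G) (hg : HasSum g s) : HasSum (fun b => ∑' a, f a b) s := by
  have hs : Summable (fun p : α × β => f p.1 p.2) := by
    refine Summable.of_norm ((summable_prod_of_nonneg fun p => norm_nonneg _).mpr ⟨?_, ?_⟩)
    · exact fun a => (hn a).summable
    · simpa only [(hn _).tsum_eq] using hG
  have h1 : ∑' p : α × β, f p.1 p.2 = s :=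
    ((hs.hasSum.prod_fiberwise hf).unique hg)
  have h2 := (Equiv.prodComm β α).hasSum_iff.mpr (h1 ▸ hs.hasSum)
  exact h2.prod_fiberwise fun b => (h2.summable.prod_factor b).hasSum

/-- The expansion `-log ∏ (1 - u n) = ∑_{n, m} u n ^ (m + 1) / (m + 1)` as an absolutely convergent
double series, in exponentiated form so that no branch of the logarithm enters. -/
lemma log_prod {u : ℕ → ℂ} (hu : Summable u) (h1 : ∀ n, ‖u n‖ < 1) :
    ∃ s, HasSum (fun p : ℕ × ℕ => u p.1 ^ (p.2 + 1) / (p.2 + 1)) s ∧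
      Complex.exp (-s) = ∏' n, (1 - u n) := by
  have hrow : ∀ n, HasSum (fun m : ℕ => u n ^ (m + 1) / (m + 1)) (-Complex.log (1 - u n)) :=
    fun n => hasSum_taylorSeries_neg_log' (h1 n)
  have hs : Summable (fun p : ℕ × ℕ => u p.1 ^ (p.2 + 1) / ((p.2 : ℂ) + 1)) := by
    refine Summable.of_norm ((summable_prod_of_nonneg fun p => norm_nonneg _).mpr ?_)
    have hr : ∀ n, HasSum (fun m : ℕ => ‖u n ^ (m + 1) / ((m : ℂ) + 1)‖)
        (-Real.log (1 - ‖u n‖)) := by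
      intro n
      have := Real.hasSum_pow_div_log_of_abs_lt_one (x := ‖u n‖) (by simpa using h1 n)
      convert this using 2 with m
      rw [norm_div, norm_pow]
      congr 1
      exact_mod_cast Complex.norm_natCast (m + 1)
    refine ⟨fun n => (hr n).summable, ?_⟩
    simp only [(hr _).tsum_eq]
    have := Real.summable_log_one_add_of_summable (f := fun n => -‖u n‖) hu.norm.neg
    simpa [sub_eq_add_neg] using this.neg
  refine ⟨_, hs.hasSum, ?_⟩
  have h2 : ∑' p : ℕ × ℕ, u p.1 ^ (p.2 + 1) / ((p.2 : ℂ) + 1) = ∑' n, -Complex.log (1 - u n) :=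
    (hs.hasSum.prod_fiberwise hrow).tsum_eq.symm
  have hl : Summable fun n => Complex.log (1 - u n) := by
    have := Complex.summable_log_one_add_of_summable (f := fun n => -u n) hu.neg
    simpa [sub_eq_add_neg] using this
  rw [h2, tsum_neg, neg_neg]
  refine Complex.cexp_tsum_eq_tprod (fun n h0 => ?_) hl
  have := h1 n
  rw [← sub_eq_zero.mp h0, norm_one] at this
  exact lt_irrefl _ this

/-! ### The sine product and the Bernoulli numbers -/

/-- The Euler product `∏ (1 - w² / n²)` of `sin (π w) / (π w)`. -/
def sinProd (w : ℂ) : ℂ := ∏' n : ℕ, (1 - w ^ 2 / ((n : ℂ) + 1) ^ 2)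

lemma summable_sin (w : ℂ) : Summable fun n : ℕ => w ^ 2 / ((n : ℂ) + 1) ^ 2 := by
  have h := summable_pow_div_add (w ^ 2) 2 1 Nat.one_lt_two
  exact Summable.of_norm (h.congr fun n => by simp)

lemma sinProd_spec (w : ℂ) : π * w * sinProd w = Complex.sin (π * w) := by
  have hm : Multipliable fun n : ℕ => (1 - w ^ 2 / ((n : ℂ) + 1) ^ 2) := by
    have := multipliable_one_add_of_summable (f := fun n : ℕ => -(w ^ 2 / ((n : ℂ) + 1) ^ 2))
      (by simpa only [norm_neg] using (summable_sin w).norm)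
    simpa only [sub_eq_add_neg] using this
  exact tendsto_nhds_unique (hm.hasProd.tendsto_prod_nat.const_mul _)
    (Complex.tendsto_euler_sin_prod w)

lemma sinProd_two_mul (z : ℂ) : sinProd (2 * z) = Complex.cos (π * z) * sinProd z := by
  rcases eq_or_ne z 0 with rfl | hz
  · simp
  · have hπ : (π : ℂ) ≠ 0 := by exact_mod_cast Real.pi_ne_zero
    have h1 := sinProd_spec (2 * z)
    rw [show (π : ℂ) * (2 * z) = 2 * (π * z) by ring, Complex.sin_two_mul, ← sinProd_spec z] at h1
    have : (2 * (π * z)) ≠ 0 := by simp [hπ, hz]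
    refine mul_left_cancel₀ this (h1.trans ?_)
    ring

/-- Euler's evaluation of `ζ(2k)`, in a form without natural-number subtraction. -/
lemma zeta_even (k : ℕ) (hk : k ≠ 0) : HasSum (fun n : ℕ => 1 / ((n : ℂ) + 1) ^ (2 * k))
    ((-1) ^ (k + 1) * 2 ^ (2 * k) / 2 * (π : ℂ) ^ (2 * k) *
      ((bernoulli (2 * k) : ℚ) : ℂ) / (Nat.factorial (2 * k) : ℂ)) := by
  have h := hasSum_zeta_nat hk
  rw [← hasSum_nat_add_iff' 1] at h
  have h2 := Complex.hasSum_ofReal.mpr h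
  have e : (2 : ℂ) ^ (2 * k) / 2 = 2 ^ (2 * k - 1) := by
    rw [div_eq_iff two_ne_zero, ← pow_succ]; congr 1; omega
  rw [mul_div_assoc ((-1 : ℂ) ^ (k + 1)), e]
  convert h2 using 1
  · ext n; push_cast; rfl
  · push_cast [Finset.sum_range_one]
    simp [hk]

/-- `B_{2k} ≠ 0` because `ζ(2k) > 0`. This is what makes the factor `B_{2k} / B_{2k}` arising from
the normalization of `Eser` equal to `1`. -/
lemma bernoulli_even_ne_zero (k : ℕ) (hk : k ≠ 0) : ((bernoulli (2 * k) : ℚ) : ℂ) ≠ 0 := by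
  intro h0
  have h0' : bernoulli (2 * k) = 0 := by exact_mod_cast h0
  have h := hasSum_zeta_nat hk
  rw [h0'] at h
  have h1 := le_hasSum h 1 fun n _ => by positivity
  simp at h1
  linarith

/-- `log (sin (π w) / (π w)) = ∑_{n ≥ 1} B_{2n} (2πiw)^{2n} / (2n (2n)!)`, the contribution of the constant
terms of the Eisenstein series. -/
lemma hasSum_log_sinProd {w : ℂ} (hw : ‖w‖ < 1) :
    ∃ s, HasSum (fun n : ℕ => ((bernoulli (2 * (n + 1)) : ℚ) : ℂ) *
        (2 * (π : ℂ) * Complex.I * w) ^ (2 * (n + 1)) /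
          ((2 * (n + 1) : ℕ) * (Nat.factorial (2 * (n + 1)) : ℂ))) s ∧
      Complex.exp s = sinProd w := by
  obtain ⟨s, hs, he⟩ := log_prod (summable_sin w) (fun n => by
    rw [norm_div, norm_pow, norm_pow]
    have h1 : ‖(n : ℂ) + 1‖ = n + 1 := by exact_mod_cast Complex.norm_natCast (n + 1)
    have h2 : (0 : ℝ) ≤ n := n.cast_nonneg
    rw [h1, div_lt_one (by positivity)]
    nlinarith [norm_nonneg w])
  refine ⟨-s, ?_, he⟩
  have h2 := ((Equiv.prodComm ℕ ℕ).hasSum_iff.mpr hs)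
  have h3 := (h2.prod_fiberwise fun b => (h2.summable.prod_factor b).hasSum).neg
  refine h3.congr_fun' fun n => ?_
  have hz := ((zeta_even (n + 1) n.succ_ne_zero).mul_left (w ^ (2 * (n + 1)) / ((n : ℂ) + 1))).tsum_eq
  have : ∑' m : ℕ, (w ^ 2 / ((m : ℂ) + 1) ^ 2) ^ (n + 1) / ((n : ℂ) + 1) =
      ∑' m : ℕ, w ^ (2 * (n + 1)) / ((n : ℂ) + 1) * (1 / ((m : ℂ) + 1) ^ (2 * (n + 1))) := by
    refine tsum_congr fun m => ?_
    rw [div_pow, ← pow_mul, ← pow_mul]; ring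
  simp only [Function.comp_apply, Equiv.prodComm_apply, Prod.swap]
  rw [this, hz, mul_pow, mul_pow, mul_pow, pow_mul Complex.I, Complex.I_sq]
  have hf : (Nat.factorial (2 * (n + 1)) : ℂ) ≠ 0 := by exact_mod_cast Nat.factorial_ne_zero _
  have hn : (n : ℂ) + 1 ≠ 0 := by exact_mod_cast n.succ_ne_zero
  push_cast
  field_simp
  ring

/-! ### The theta product and the Lambert series -/

/-- `∑ (m+1)^(2k) / (m+1) * q^((n+1)(m+1))`; for `k ≥ 1` this is `∑ σ_{2k-1}(n) q^n`. -/
def lambert (q : ℂ) (k : ℕ) : ℂ :=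
  ∑' p : ℕ × ℕ, ((p.2 : ℂ) + 1) ^ (2 * k) / ((p.2 : ℂ) + 1) * q ^ ((p.1 + 1) * (p.2 + 1))

lemma lambert_succ {q : ℂ} (hq : ‖q‖ < 1) (k : ℕ) : lambert q (k + 1) =
    ∑' n : ℕ, ((ArithmeticFunction.sigma (2 * (k + 1) - 1)) (n + 1) : ℂ) * q ^ (n + 1) := by
  have h1 := tsum_prod_pow_eq_tsum_sigma (2 * (k + 1) - 1) hq
  rw [← (summable_prod_mul_pow (2 * (k + 1) - 1) hq).tsum_prod] at h1
  rw [tsum_pnat_eq_tsum_succ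
    (f := fun n => ((ArithmeticFunction.sigma (2 * (k + 1) - 1)) n : ℂ) * q ^ n)] at h1
  rw [← h1, lambert, ← (Equiv.pnatEquivNat.prodCongr Equiv.pnatEquivNat).tsum_eq]
  refine tsum_congr fun p => ?_
  have e : ∀ n : ℕ+, Equiv.pnatEquivNat n + 1 = (n : ℕ) := fun n => PNat.natPred_add_one n
  have e' : ∀ n : ℕ+, ((Equiv.pnatEquivNat n : ℕ) : ℂ) + 1 = ((n : ℕ) : ℂ) := fun n => by
    exact_mod_cast congrArg (Nat.cast (R := ℂ)) (e n)
  simp only [Equiv.prodCongr_apply, Prod.map_fst, Prod.map_snd, e, e']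
  have h0 : ((p.2 : ℕ) : ℂ) ≠ 0 := by exact_mod_cast p.2.ne_zero
  rw [show 2 * (k + 1) - 1 = 2 * k + 1 by omega, show 2 * (k + 1) = 2 * k + 1 + 1 by ring,
    pow_succ, mul_div_assoc, div_self h0, mul_one]

lemma log_qpoch {q x : ℂ} (hq : ‖q‖ < 1) (hx : ‖x * q‖ < 1) :
    ∃ s, HasSum (fun p : ℕ × ℕ => x ^ (p.2 + 1) * q ^ ((p.1 + 1) * (p.2 + 1)) / (p.2 + 1)) s ∧
      Complex.exp (-s) = qpoch q (x * q) := by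
  obtain ⟨s, hs, he⟩ := log_prod (summable_geom hq (x * q)) (fun n => by
    rw [norm_mul, norm_pow]
    have := pow_le_one₀ (n := n) (norm_nonneg _) hq.le
    nlinarith [norm_nonneg (x * q), norm_nonneg q])
  refine ⟨s, hs.congr_fun' fun p => ?_, he⟩
  congr 1
  rw [mul_assoc, ← pow_succ', mul_pow, ← pow_mul]

/-- `-log thetaProd q (exp (2πiw)) = ∑_{k ≥ 0} 2 (2πiw)^{2k} / (2k)! · lambert q k`, the contribution of
the divisor sums of the Eisenstein series. -/
lemma log_thetaProd {q w : ℂ} (hq : ‖q‖ < 1) (hw : Real.exp (2 * π * ‖w‖) * ‖q‖ < 1) :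
    ∃ s, HasSum (fun k : ℕ => 2 * (2 * (π : ℂ) * Complex.I * w) ^ (2 * k) /
        (Nat.factorial (2 * k) : ℂ) * lambert q k) s ∧
      Complex.exp (-s) = thetaProd q (Complex.exp (2 * π * Complex.I * w)) := by
  have hπ := Real.pi_pos
  have hre : ∀ v : ℂ, ‖v‖ = 2 * π * ‖w‖ → ‖Complex.exp v * q‖ < 1 := by
    intro v hv
    rw [norm_mul, Complex.norm_exp]
    refine lt_of_le_of_lt ?_ hw
    gcongr
    rw [← hv]; exact Complex.re_le_norm v
  have hn : ‖2 * (π : ℂ) * Complex.I * w‖ = 2 * π * ‖w‖ := by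
    simp [abs_of_pos hπ]
  obtain ⟨s1, hs1, he1⟩ := log_qpoch hq (hre _ hn)
  obtain ⟨s2, hs2, he2⟩ := log_qpoch hq (hre (-(2 * (π : ℂ) * Complex.I * w)) (by rw [norm_neg, hn]))
  obtain ⟨r1, hr1, -⟩ := log_qpoch (q := (‖q‖ : ℂ)) (by simpa using hq)
    (x := Complex.exp ((2 * π * ‖w‖ : ℝ) : ℂ)) (by
      rw [← Complex.ofReal_exp, ← Complex.ofReal_mul, Complex.norm_real,
        Real.norm_of_nonneg (by positivity)]; exact hw)
  obtain ⟨r2, hr2, -⟩ := log_qpoch (q := (‖q‖ : ℂ)) (by simpa using hq)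
    (x := Complex.exp ((-(2 * π * ‖w‖) : ℝ) : ℂ)) (by
      rw [← Complex.ofReal_exp, ← Complex.ofReal_mul, Complex.norm_real,
        Real.norm_of_nonneg (by positivity)]
      refine lt_of_le_of_lt ?_ hw
      gcongr
      have : 0 ≤ 2 * π * ‖w‖ := by positivity
      linarith)
  refine ⟨s1 + s2, ?_, ?_⟩
  swap
  · rw [neg_add, Complex.exp_add, he1, he2, thetaProd, Complex.exp_neg]
  have hG := (hr1.add hr2).summable.norm
  have hmain := hasSum_swap
    (f := fun (p : ℕ × ℕ) (k : ℕ) => 2 * (q ^ ((p.1 + 1) * (p.2 + 1)) / ((p.2 : ℂ) + 1)) *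
      ((2 * π * ((p.2 : ℂ) + 1) * w * Complex.I) ^ (2 * k) / (Nat.factorial (2 * k) : ℂ)))
    (fun p => (Complex.hasSum_cos' _).mul_left _)
    (G := fun p => 2 * (‖q‖ ^ ((p.1 + 1) * (p.2 + 1)) / ((p.2 : ℝ) + 1)) *
      Real.cosh (2 * π * ((p.2 : ℝ) + 1) * ‖w‖)) ?_ ?_ (s := s1 + s2) ?_
  · refine hmain.congr_fun' fun k => ?_
    rw [lambert, ← tsum_mul_left]
    refine tsum_congr fun p => ?_
    simp only [mul_pow]
    ring
  · intro p
    refine ((Real.hasSum_cosh (2 * π * ((p.2 : ℝ) + 1) * ‖w‖)).mul_left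
      (2 * (‖q‖ ^ ((p.1 + 1) * (p.2 + 1)) / ((p.2 : ℝ) + 1)))).congr_fun' fun k => ?_
    have h1 : ‖(p.2 : ℂ) + 1‖ = p.2 + 1 := by exact_mod_cast Complex.norm_natCast (p.2 + 1)
    simp [h1, abs_of_pos hπ]
  · refine hG.congr fun p => ?_
    have h1 : ‖(p.2 : ℂ) + 1‖ = p.2 + 1 := by exact_mod_cast Complex.norm_natCast (p.2 + 1)
    rw [← add_div, ← add_mul, norm_div, h1, ← Complex.exp_nat_mul, ← Complex.exp_nat_mul]
    rw [show ((p.2 + 1 : ℕ) : ℂ) * ((2 * π * ‖w‖ : ℝ) : ℂ) =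
        ((2 * π * ((p.2 : ℝ) + 1) * ‖w‖ : ℝ) : ℂ) by push_cast; ring,
      show ((p.2 + 1 : ℕ) : ℂ) * ((-(2 * π * ‖w‖) : ℝ) : ℂ) =
        ((-(2 * π * ((p.2 : ℝ) + 1) * ‖w‖) : ℝ) : ℂ) by push_cast; ring]
    rw [← Complex.ofReal_exp, ← Complex.ofReal_exp, ← Complex.ofReal_add, ← Complex.ofReal_pow,
      ← Complex.ofReal_mul, Complex.norm_real, Real.norm_of_nonneg (by positivity), Real.cosh_eq]
    ring
  · refine (hs1.add hs2).congr_fun' fun p => ?_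
    rw [Complex.cos, ← Complex.exp_nat_mul, ← Complex.exp_nat_mul]
    rw [show ((p.2 + 1 : ℕ) : ℂ) * (2 * π * Complex.I * w) =
        2 * π * ((p.2 : ℂ) + 1) * w * Complex.I by push_cast; ring,
      show ((p.2 + 1 : ℕ) : ℂ) * (-(2 * π * Complex.I * w)) =
        -(2 * π * ((p.2 : ℂ) + 1) * w) * Complex.I by push_cast; ring]
    ring

/-! ### The generating function of the series `V` -/

lemma pentTerm_exp (q c : ℂ) (j : ℤ) :
    Complex.exp c * pentTerm q (Complex.exp (2 * c)) j =
      (-1) ^ j * q ^ (j * (3 * j + 1) / 2) * Complex.exp (((6 * j + 1 : ℤ) : ℂ) * c) := by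
  have : Complex.exp c * Complex.exp (2 * c) ^ (3 * j) = Complex.exp (((6 * j + 1 : ℤ) : ℂ) * c) := by
    rw [← Complex.exp_int_mul, ← Complex.exp_add]; congr 1; push_cast; ring
  rw [pentTerm, ← this]; ring

/-- The pentagonal theta series twisted by `cos ((6j + 1) c)` as the right-hand side of the quintuple
product at `x = exp (2ic)`. -/
lemma hasSum_cos_pent {q : ℂ} (hq : ‖q‖ < 1) (hq0 : q ≠ 0) (c : ℂ) :
    HasSum (fun j : ℤ => (-1) ^ j * q ^ (j * (3 * j + 1) / 2) *
        Complex.cos (((6 * j + 1 : ℤ) : ℂ) * c))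
      (Complex.exp (c * Complex.I) / 2 * ((∑' k : ℤ, pentTerm q (Complex.exp (2 * (c * Complex.I))) k) +
        (Complex.exp (2 * (c * Complex.I)))⁻¹ *
          ∑' k : ℤ, pentTerm q (Complex.exp (2 * (c * Complex.I)))⁻¹ k)) := by
  have s1 := (summable_norm_pentTerm hq hq0
    (Complex.exp_ne_zero (2 * (c * Complex.I)))).of_norm.hasSum.mul_left (Complex.exp (c * Complex.I))
  have s2 := (summable_norm_pentTerm hq hq0
    (Complex.exp_ne_zero (2 * (-c * Complex.I)))).of_norm.hasSum.mul_left (Complex.exp (-c * Complex.I))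
  have e1 : (Complex.exp (2 * (c * Complex.I)))⁻¹ = Complex.exp (2 * (-c * Complex.I)) := by
    rw [← Complex.exp_neg]; congr 1; ring
  have e2 : Complex.exp (-c * Complex.I) =
      Complex.exp (c * Complex.I) * Complex.exp (2 * (-c * Complex.I)) := by
    rw [← Complex.exp_add]; congr 1; ring
  have h := ((s1.add s2).div_const 2)
  rw [e1, show ∀ A B : ℂ, Complex.exp (c * Complex.I) / 2 *
      (A + Complex.exp (2 * (-c * Complex.I)) * B) =
      (Complex.exp (c * Complex.I) * A + Complex.exp (-c * Complex.I) * B) / 2 from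
      fun A B => by rw [e2]; ring]
  refine h.congr_fun' fun j => ?_
  rw [pentTerm_exp, pentTerm_exp, Complex.cos]
  rw [show ((6 * j + 1 : ℤ) : ℂ) * (c * Complex.I) = ((6 * j + 1 : ℤ) : ℂ) * c * Complex.I by ring,
    show ((6 * j + 1 : ℤ) : ℂ) * (-c * Complex.I) = -(((6 * j + 1 : ℤ) : ℂ) * c) * Complex.I by ring]
  ring

/-- The generating function of `Vram` as a quotient of theta products. The numerator series is
`∑ (-1)^j q^(j(3j+1)/2) cos ((6j + 1) π z)`. -/
lemma hasSum_Vram {q : ℂ} (hq : ‖q‖ < 1) (hq0 : q ≠ 0) (z : ℂ)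
    (hΘ : thetaProd q (Complex.exp (2 * π * Complex.I * z)) ≠ 0) :
    HasSum (fun n : ℕ => (-1 : ℂ) ^ n * Vram n q * ((π : ℂ) * z) ^ (2 * n) /
        (Nat.factorial (2 * n) : ℂ))
      (Complex.cos (π * z) * thetaProd q (Complex.exp (2 * π * Complex.I * (2 * z))) /
        thetaProd q (Complex.exp (2 * π * Complex.I * z))) := by
  set D : ℂ := ∑' j : ℤ, (-1 : ℂ) ^ j * q ^ (j * (3 * j + 1) / 2) with hD
  -- the value at `z = 0` pins the constant
  have h0 := pent_product hq hq0 one_ne_zero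
  have hT1 : thetaProd q 1 ≠ 0 := by
    simpa [thetaProd] using qpoch_ne_zero' hq hq
  have hK : qpoch q q * qpoch (q ^ 2) (q ^ 2) ≠ 0 :=
    mul_ne_zero (qpoch_ne_zero' hq hq) (qpoch_ne_zero' (norm_sq_lt hq) (norm_sq_lt hq))
  have hDK : pentConst q * D = qpoch q q * qpoch (q ^ 2) (q ^ 2) := by
    have hp : ∑' k : ℤ, pentTerm q 1 k = D := by simp [pentTerm, hD]
    simp only [inv_one, one_pow, hp, one_mul] at h0
    refine mul_right_cancel₀ (mul_ne_zero hT1 two_ne_zero) ?_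
    linear_combination h0
  have hC0 : pentConst q ≠ 0 := fun h => hK (by rw [← hDK, h, zero_mul])
  have hD0 : D ≠ 0 := fun h => hK (by rw [← hDK, h, mul_zero])
  have hc := hasSum_cos_pent hq hq0 (π * z)
  have hx : Complex.exp (2 * (π * z * Complex.I)) = Complex.exp (2 * π * Complex.I * z) := by
    congr 1; ring
  rw [hx] at hc
  have hpp := pent_product hq hq0 (Complex.exp_ne_zero (2 * π * Complex.I * z))
  have hx2 : Complex.exp (2 * π * Complex.I * z) ^ 2 = Complex.exp (2 * π * Complex.I * (2 * z)) := by
    rw [← Complex.exp_nat_mul]; congr 1; push_cast; ring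
  rw [hx2] at hpp
  have hcos : Complex.exp (π * z * Complex.I) * (1 + (Complex.exp (2 * π * Complex.I * z))⁻¹) =
      2 * Complex.cos (π * z) := by
    rw [Complex.cos, mul_add, ← Complex.exp_neg, ← Complex.exp_add, mul_one,
      show π * z * Complex.I + -(2 * π * Complex.I * z) = -(π * z) * Complex.I by ring]
    ring
  set S := (∑' k : ℤ, pentTerm q (Complex.exp (2 * π * Complex.I * z)) k) +
    (Complex.exp (2 * π * Complex.I * z))⁻¹ *
      ∑' k : ℤ, pentTerm q (Complex.exp (2 * π * Complex.I * z))⁻¹ k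
  have hval : Complex.cos (π * z) * thetaProd q (Complex.exp (2 * π * Complex.I * (2 * z))) /
        thetaProd q (Complex.exp (2 * π * Complex.I * z)) =
      Complex.exp (π * z * Complex.I) / 2 * S / D := by
    rw [div_eq_div_iff hΘ hD0]
    refine mul_left_cancel₀ hC0 ?_
    rw [← hDK] at hpp
    linear_combination (-Complex.exp (π * z * Complex.I) / 2) * hpp -
      (pentConst q * D * thetaProd q (Complex.exp (2 * π * Complex.I * (2 * z))) / 2) * hcos
  rw [hval]
  -- expand every cosine and interchange the two summations
  have hπ := Real.pi_pos
  have hq' : ‖(‖q‖ : ℂ)‖ < 1 := by simpa using hq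
  have hq0' : (‖q‖ : ℂ) ≠ 0 := by simpa using hq0
  have hsumG := (hasSum_cos_pent hq' hq0' ((π * ‖z‖ : ℝ) * Complex.I)).summable.norm
  have hswap := hasSum_swap
    (f := fun (j : ℤ) (n : ℕ) => (-1 : ℂ) ^ j * q ^ (j * (3 * j + 1) / 2) *
      ((-1) ^ n * (((6 * j + 1 : ℤ) : ℂ) * (π * z)) ^ (2 * n) / (Nat.factorial (2 * n) : ℂ)))
    (fun j => (Complex.hasSum_cos _).mul_left _)
    (G := fun j => ‖q‖ ^ (j * (3 * j + 1) / 2) * Real.cosh (((6 * j + 1 : ℤ) : ℝ) * (π * ‖z‖)))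
    ?_ ?_ hc
  · refine (hswap.div_const D).congr_fun' fun n => ?_
    rw [Vram, ← hD, mul_div_assoc', div_mul_eq_mul_div, div_right_comm]
    congr 1
    rw [← tsum_mul_left, ← tsum_mul_right, ← tsum_div_const]
    refine tsum_congr fun j => ?_
    rw [mul_pow _ (π * z)]
    ring
  · intro j
    refine ((Real.hasSum_cosh (((6 * j + 1 : ℤ) : ℝ) * (π * ‖z‖))).mul_left
      (‖q‖ ^ (j * (3 * j + 1) / 2))).congr_fun' fun n => ?_
    have h1 : ‖((6 * j + 1 : ℤ) : ℂ)‖ ^ (2 * n) = ((6 * j + 1 : ℤ) : ℝ) ^ (2 * n) := by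
      rw [Complex.norm_intCast, pow_mul, sq_abs, pow_mul]
    simp only [norm_mul, norm_div, norm_pow, norm_zpow, norm_neg, norm_one, one_pow, one_zpow,
      one_mul, Complex.norm_natCast, Complex.norm_real, Real.norm_of_nonneg hπ.le, mul_pow, h1]
  · refine hsumG.congr fun j => ?_
    rw [← mul_assoc, Complex.cos_mul_I]
    rw [show ((6 * j + 1 : ℤ) : ℂ) * ((π * ‖z‖ : ℝ) : ℂ) =
      ((((6 * j + 1 : ℤ) : ℝ) * (π * ‖z‖) : ℝ) : ℂ) by push_cast; ring, ← Complex.ofReal_cosh]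
    simp only [norm_mul, norm_zpow, norm_neg, norm_one, one_zpow, one_mul, Complex.norm_real,
      norm_norm]
    rw [Real.norm_of_nonneg (Real.cosh_pos _).le]

/-- For every `τ ∈ ℍ` and every `z` in a sufficiently small neighborhood
of `0`,
`∑_{n≥0} (−1)^n V_{2n}(q) (πz)^{2n}/(2n)! = exp(∑_{n≥1} (4ⁿ−1)B_{2n}E_{2n}(τ)(2πiz)^{2n}/(2n·(2n)!))`. -/
theorem V_generating_function_exp
    (τ : ℂ) (hτ : 0 < τ.im) :
    ∃ ε > 0, ∀ z : ℂ, ‖z‖ < ε →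
      HasSum (fun n : ℕ =>
          (-1 : ℂ) ^ n * Vram n (qq τ) * ((π : ℂ) * z) ^ (2 * n) /
            (Nat.factorial (2 * n) : ℂ))
        (Complex.exp (∑' n : ℕ,
          ((4 : ℂ) ^ (n + 1) - 1) * ((bernoulli (2 * (n + 1)) : ℚ) : ℂ) * Eser (n + 1) τ *
            (2 * (π : ℂ) * Complex.I * z) ^ (2 * (n + 1)) /
            ((2 * (n + 1) : ℕ) * (Nat.factorial (2 * (n + 1)) : ℂ)))) := by
  have hq0 : qq τ ≠ 0 := Complex.exp_ne_zero _
  have hq : ‖qq τ‖ < 1 := by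
    rw [qq, Complex.norm_exp, Real.exp_lt_one_iff]
    have : (2 * (π : ℂ) * Complex.I * τ).re = -(2 * π * τ.im) := by simp
    have hπ := Real.pi_pos
    rw [this]
    have : 0 < 2 * π * τ.im := by positivity
    linarith
  obtain ⟨ε, hε, hball⟩ : ∃ ε > 0, ∀ z : ℂ, ‖z‖ < ε →
      Real.exp (2 * π * ‖2 * z‖) * ‖qq τ‖ < 1 ∧ ‖2 * z‖ < 1 := by
    have c1 : ContinuousAt (fun z : ℂ => Real.exp (2 * π * ‖2 * z‖) * ‖qq τ‖) 0 := by fun_prop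
    have c2 : ContinuousAt (fun z : ℂ => ‖2 * z‖) 0 := by fun_prop
    have e1 := c1.eventually_lt (continuousAt_const (y := (1 : ℝ))) (by simpa using hq)
    have e2 := c2.eventually_lt (continuousAt_const (y := (1 : ℝ))) (by simp)
    obtain ⟨ε, hε, h⟩ := Metric.eventually_nhds_iff.mp (e1.and e2)
    exact ⟨ε, hε, fun z hz => h (by simpa using hz)⟩
  refine ⟨ε, hε, fun z hz => ?_⟩
  obtain ⟨h2q, h2⟩ := hball z hz
  have hle : ‖z‖ ≤ ‖2 * z‖ := by
    rw [norm_mul, Complex.norm_ofNat]; linarith [norm_nonneg z]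
  have h1q : Real.exp (2 * π * ‖z‖) * ‖qq τ‖ < 1 := by
    refine lt_of_le_of_lt ?_ h2q
    have := Real.pi_pos
    gcongr
  obtain ⟨s1, hs1, he1⟩ := log_thetaProd hq h1q
  obtain ⟨s2, hs2, he2⟩ := log_thetaProd hq h2q
  obtain ⟨t1, ht1, hf1⟩ := hasSum_log_sinProd (hle.trans_lt h2)
  obtain ⟨t2, ht2, hf2⟩ := hasSum_log_sinProd h2
  have hV := hasSum_Vram hq hq0 z (he1 ▸ Complex.exp_ne_zero _)
  -- the constant terms of the two theta logarithms agree and cancel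
  have hs := (hasSum_nat_add_iff' 1).mpr (hs2.sub hs1)
  simp only [Finset.sum_range_one, mul_zero, pow_zero, sub_self, sub_zero] at hs
  have hsum := (ht2.sub ht1).sub hs
  convert hV using 1
  rw [(hsum.congr_fun' fun n => ?_).tsum_eq]
  · have hcos : Complex.cos (π * z) = Complex.exp t2 / Complex.exp t1 := by
      rw [eq_div_iff (Complex.exp_ne_zero _), hf1, hf2, sinProd_two_mul]
    rw [hcos, ← he1, ← he2, ← Complex.exp_sub, ← Complex.exp_add, ← Complex.exp_sub]
    congr 1; ring
  · have hB := bernoulli_even_ne_zero (n + 1) n.succ_ne_zero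
    have hn : (n : ℂ) + 1 ≠ 0 := by exact_mod_cast n.succ_ne_zero
    have hfac : (Nat.factorial (2 * (n + 1)) : ℂ) ≠ 0 := by
      exact_mod_cast Nat.factorial_ne_zero _
    have hpow : (2 * (π : ℂ) * Complex.I * (2 * z)) ^ (2 * (n + 1)) =
        4 ^ (n + 1) * (2 * π * Complex.I * z) ^ (2 * (n + 1)) := by
      rw [show 2 * (π : ℂ) * Complex.I * (2 * z) = 2 * (2 * π * Complex.I * z) by ring, mul_pow,
        pow_mul 2]
      norm_num
    rw [Eser, ← lambert_succ hq, hpow]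
    push_cast
    field_simp
    ring
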